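/- Let A ⊆ ℝⁿ have finite positive Lebesgue measure, with the sets D_k(A) of the dyadic decomposition, and let K be the integer-valued random variable with P{K = k} = 2^{-nk}|D_k(A)|/Vₙ(A). Then E[K] ≤ h_{⊖[0,1]ⁿ}(A) + 2, where h_{⊖[0,1]ⁿ}(A) = ∫_{-∞}^{∞}(1{t≥0} - Vₙ(A ⊖ [0,2^{-t}]ⁿ)/Vₙ(A)) dt. -/

import Mathlib

open MeasureTheory

/-- The dyadic hypercube `C_{k,v} = 2^{-k}([0,1]ⁿ + v)`. -/
def dyadicCube (n : ℕ) (k : ℤ) (v : Fin n → ℤ) : Set (Fin n → ℝ) :=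
  {x | ∀ i, (2 : ℝ) ^ (-k) * (v i : ℝ) ≤ x i ∧ x i ≤ (2 : ℝ) ^ (-k) * ((v i : ℝ) + 1)}

/-- `D_k(A)`: positions of the maximal dyadic hypercubes of side `2^{-k}` contained in `A`. -/
def dyadicFamily (n : ℕ) (A : Set (Fin n → ℝ)) (k : ℤ) : Set (Fin n → ℤ) :=
  {v | dyadicCube n k v ⊆ A ∧ ¬ dyadicCube n (k - 1) (fun i => Int.fdiv (v i) 2) ⊆ A}

/-- The Minkowski erosion `A ⊖ B = {x : B + x ⊆ A}`. -/
def erosion {n : ℕ} (A B : Set (Fin n → ℝ)) : Set (Fin n → ℝ) :=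
  {x | ∀ b ∈ B, b + x ∈ A}

/-- The erosion entropy `h_{⊖[0,1]ⁿ}(A) = ∫ (1{t≥0} - Vₙ(A ⊖ [0,2^{-t}]ⁿ)/Vₙ(A)) dt`. -/
noncomputable def erosionEntropy (n : ℕ) (A : Set (Fin n → ℝ)) : ℝ :=
  ∫ t : ℝ, ((if 0 ≤ t then (1 : ℝ) else 0) -
    (volume (erosion A {x : Fin n → ℝ | ∀ i, x i ∈ Set.Icc (0 : ℝ) ((2 : ℝ) ^ (-t))})).toReal
      / (volume A).toReal)


lemma abel_aux (F : ℤ → ℝ) (L : ℕ) (hF0 : ∀ k : ℤ, k ≤ -(L:ℤ) → F k = 0) (N : ℕ) :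
    ∑ i ∈ Finset.range (N+1), (((i:ℤ) - (L:ℤ) : ℤ) : ℝ) * (F ((i:ℤ) - L) - F ((i:ℤ) - L - 1))
      = ((N:ℝ) - L) * F ((N:ℤ) - L) - ∑ i ∈ Finset.range N, F ((i:ℤ) - L) := by
  induction N with
  | zero =>
    have h1 := hF0 (0 - L) (by omega)
    have h2 := hF0 (0 - L - 1) (by omega)
    simp at h1 h2
    simp [h1, h2]
  | succ N ih =>
    rw [Finset.sum_range_succ, ih, Finset.sum_range_succ _ N]
    have : ((N + 1 : ℕ) : ℤ) - L - 1 = N - L := by push_cast; ring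
    rw [this]
    push_cast
    ring

lemma analytic_aux (F : ℤ → ℝ) (f : ℝ → ℝ) (n L : ℕ) (hFm : Monotone F)
    (hF0 : ∀ k : ℤ, k ≤ -(L:ℤ) → F k = 0)
    (hF1 : Filter.Tendsto (fun k : ℕ => F k) Filter.atTop (nhds 1))
    (hfm : Monotone f) (hf0 : ∀ t, 0 ≤ f t) (hf1 : ∀ t, f t ≤ 1)
    (h1 : ∀ k : ℤ, f ((k:ℝ) - 1) ≤ F k)
    (h2 : ∀ k : ℕ, (1 - n * (1/2:ℝ)^k) * F k ≤ f (2 * (k:ℝ)))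
    (hsum : Summable fun k : ℤ => (k:ℝ) * (F k - F (k-1))) :
    ∑' k : ℤ, (k:ℝ) * (F k - F (k-1)) ≤ (∫ t : ℝ, ((if 0 ≤ t then (1:ℝ) else 0) - f t)) + 2 := by
  have hFn : ∀ k, 0 ≤ F k := fun k => (hf0 _).trans (h1 k)
  have hFle : ∀ k : ℕ, F k ≤ 1 := fun k =>
    (show Monotone (fun k : ℕ => F k) from fun a b h => hFm (by exact_mod_cast h)).ge_of_tendsto hF1 k
  -- convergence of partial sums
  let φ : ℕ → ℤ := fun i => (i:ℤ) - L
  have hφ : Function.Injective φ := fun a b h => by simp only [φ] at h; omega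
  have hsupp : ∀ x ∉ Set.range φ, (fun k : ℤ => (k:ℝ) * (F k - F (k-1))) x = 0 := by
    intro x hx
    have : x ≤ -(L:ℤ) := by
      by_contra hc
      exact hx ⟨(x + L).toNat, by simp only [φ]; omega⟩
    simp [hF0 x this, hF0 (x-1) (by omega)]
  have hS := ((hφ.hasSum_iff hsupp).2 hsum.hasSum).tendsto_sum_nat
  set T := ∑' k : ℤ, (k:ℝ) * (F k - F (k-1)) with hT
  have hS' : Filter.Tendsto (fun N : ℕ => ((N:ℝ) - L) * F ((N:ℤ) - L)
      - ∑ i ∈ Finset.range N, F ((i:ℤ) - L)) Filter.atTop (nhds T) := by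
    refine (hS.comp (Filter.tendsto_add_atTop_nat 1)).congr fun N => ?_
    rw [← abel_aux F L hF0 N]
    simp [φ, Function.comp]
  have hS'' := hS'.comp (Filter.tendsto_add_atTop_nat L)
  -- summability of 1 - F
  obtain ⟨C, hC⟩ := hS''.bddAbove_range
  set c0 := ∑ i ∈ Finset.range L, F ((i:ℤ) - L) with hc0
  have key : ∀ M : ℕ, ∑ k ∈ Finset.range M, (F M - F k) ≤ C + c0 := by
    intro M
    have := hC ⟨M, rfl⟩
    simp only [Function.comp] at this
    rw [add_comm M L, Finset.sum_range_add] at this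
    have e : ∀ x : ℕ, (((L + x : ℕ) : ℤ) - L) = x := fun x => by push_cast; ring
    simp only [e] at this
    rw [Finset.sum_sub_distrib]
    simp only [Finset.sum_const, Finset.card_range, nsmul_eq_mul]
    push_cast at this
    rw [add_sub_cancel_left] at this
    linarith
  have hsF : Summable (fun k : ℕ => 1 - F k) := by
    refine summable_of_sum_range_le (c := C + c0) (fun k => by linarith [hFle k]) fun m => ?_
    have ht : Filter.Tendsto (fun M : ℕ => ∑ k ∈ Finset.range m, (F M - F k)) Filter.atTop
        (nhds (∑ k ∈ Finset.range m, (1 - F k))) :=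
      tendsto_finsetSum _ fun k _ => hF1.sub_const _
    refine le_of_tendsto ht (Filter.eventually_atTop.2 ⟨m, fun M hM => ?_⟩)
    refine le_trans ?_ (key M)
    refine Finset.sum_le_sum_of_subset_of_nonneg (by simpa using hM) fun i hi _ => ?_
    have : i < M := by simpa using hi
    linarith [hFm (show (i:ℤ) ≤ M by exact_mod_cast this.le)]
  -- integrability
  have hu : Summable (fun k : ℕ => 1 - f (2 * (k:ℝ))) := by
    refine Summable.of_nonneg_of_le (fun k => by linarith [hf1 (2 * (k:ℝ))]) (fun k => ?_)
      (hsF.add ((summable_geometric_of_lt_one (r := (1/2:ℝ)) (by norm_num)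
        (by norm_num)).mul_left (n:ℝ)))
    have := h2 k
    have h3 : (n:ℝ) * (1/2)^k * F k ≤ n * (1/2)^k * 1 :=
      mul_le_mul_of_nonneg_left (hFle k) (by positivity)
    nlinarith
  have hanti : Antitone (fun s : ℝ => 1 - f (2 * s)) := fun a b h => by
    have := hfm (show 2 * a ≤ 2 * b by linarith)
    simp only; linarith
  have hI1 : IntegrableOn (fun s : ℝ => 1 - f (2 * s)) (Set.Ioi 0) := by
    refine integrableOn_Ioi_of_intervalIntegral_norm_bounded (l := Filter.atTop) (b := fun m : ℕ => (m:ℝ))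
      (∑' k : ℕ, (1 - f (2 * (k:ℝ)))) 0 (fun m => ?_) tendsto_natCast_atTop_atTop ?_
    · exact ((hanti.antitoneOn _).intervalIntegrable (a := 0) (b := (m:ℝ))).1
    · refine Filter.Eventually.of_forall fun m => ?_
      have e : ∀ s, ‖1 - f (2 * s)‖ = 1 - f (2 * s) := fun s => by
        rw [Real.norm_eq_abs, abs_of_nonneg]; linarith [hf1 (2*s)]
      simp only [e]
      have := (hanti.antitoneOn (Set.Icc (0:ℝ) (0 + (m:ℕ)))).integral_le_sum
      simp only [zero_add] at this
      refine this.trans (hu.sum_le_tsum _ fun k _ => by linarith [hf1 (2 * (k:ℝ))])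
  have hI2 : IntegrableOn (fun s : ℝ => 1 - f s) (Set.Ioi 0) := by
    have := (integrableOn_Ioi_comp_mul_left_iff (fun s : ℝ => 1 - f s) 0 (a := 2) (by norm_num)).1 hI1
    simpa using this
  have hfz : ∀ t : ℝ, t ≤ -(L:ℝ) - 1 → f t = 0 := by
    intro t ht
    refine le_antisymm ?_ (hf0 t)
    refine (hfm ht).trans ?_
    have := h1 (-(L:ℤ))
    rw [hF0 _ le_rfl] at this
    push_cast at this
    exact this
  have hI3 : IntegrableOn f (Set.Iic 0) := by
    have hL : -(L:ℝ) - 1 ≤ 0 := by have : (0:ℝ) ≤ L := by positivity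
                                   linarith
    rw [← Set.Iic_union_Ioc_eq_Iic hL]
    refine IntegrableOn.union ?_ ?_
    · refine (integrableOn_zero).congr_fun (fun t ht => ?_) measurableSet_Iic
      exact (hfz t ht).symm
    · exact ((hfm.monotoneOn _).intervalIntegrable (a := -(L:ℝ) - 1) (b := 0)).1
  set g : ℝ → ℝ := fun t => (if 0 ≤ t then (1:ℝ) else 0) - f t with hg
  have hgI : IntegrableOn g (Set.Ioi 0) := by
    refine hI2.congr_fun (fun t ht => ?_) measurableSet_Ioi
    have : (0:ℝ) ≤ t := le_of_lt ht
    simp [hg, this]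
  have hgI' : IntegrableOn g (Set.Iio 0) := by
    refine (hI3.neg.mono_set Set.Iio_subset_Iic_self).congr_fun (fun t ht => ?_) measurableSet_Iio
    have : ¬ (0:ℝ) ≤ t := not_le.2 ht
    simp [hg, this]
  have hgi : Integrable g := by
    rw [← integrableOn_univ, ← Set.Iic_union_Ioi (a := (0:ℝ))]
    exact ((integrableOn_Iic_iff_integrableOn_Iio).2 hgI').union hgI
  -- the limit of the interval integrals
  have hlim : Filter.Tendsto (fun M : ℕ => ∫ t in (-(L:ℝ) - 2)..((M:ℝ) - 2), g t) Filter.atTop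
      (nhds (∫ t in Set.Ioi (-(L:ℝ) - 2), g t)) :=
    intervalIntegral_tendsto_integral_Ioi _ hgi.integrableOn
      (Filter.tendsto_atTop_add_const_right _ _ tendsto_natCast_atTop_atTop)
  have hgt : ∫ t in Set.Ioi (-(L:ℝ) - 2), g t = ∫ t, g t := by
    refine setIntegral_eq_integral_of_forall_compl_eq_zero fun t ht => ?_
    have ht' : t ≤ -(L:ℝ) - 2 := by simpa using ht
    have hL0 : (0:ℝ) ≤ L := by positivity
    have : ¬ (0:ℝ) ≤ t := by linarith
    simp [hg, this, hfz t (by linarith)]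
  rw [hgt] at hlim
  refine le_of_tendsto_of_tendsto hS'' (hlim.add_const 2) (Filter.eventually_atTop.2 ⟨2, fun M hM => ?_⟩)
  have hM2 : (2:ℝ) ≤ M := by exact_mod_cast hM
  have hL0 : (0:ℝ) ≤ L := by positivity
  have hii : ∀ a b : ℝ, IntervalIntegrable f volume a b := fun a b =>
    (hfm.monotoneOn _).intervalIntegrable
  have hgii : ∀ a b : ℝ, IntervalIntegrable g volume a b := fun a b => hgi.intervalIntegrable
  have hA : ∫ t in (-(L:ℝ) - 2)..((M:ℝ) - 2), g t
      = (M - 2) - ∫ t in (-(L:ℝ) - 2)..((M:ℝ) - 2), f t := by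
    rw [← intervalIntegral.integral_add_adjacent_intervals (hgii _ 0) (hgii 0 _),
      ← intervalIntegral.integral_add_adjacent_intervals (hii _ 0) (hii 0 _)]
    have e1 : ∫ t in (-(L:ℝ) - 2)..0, g t = - ∫ t in (-(L:ℝ) - 2)..0, f t := by
      rw [← intervalIntegral.integral_neg]
      rw [intervalIntegral.integral_of_le (by linarith), intervalIntegral.integral_of_le (by linarith),
        integral_Ioc_eq_integral_Ioo, integral_Ioc_eq_integral_Ioo]
      refine setIntegral_congr_fun measurableSet_Ioo fun t ht => ?_
      have : ¬ (0:ℝ) ≤ t := not_le.2 ht.2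
      simp [hg, this]
    have e2 : ∫ t in (0:ℝ)..((M:ℝ)-2), g t = (M - 2) - ∫ t in (0:ℝ)..((M:ℝ)-2), f t := by
      have : ∫ t in (0:ℝ)..((M:ℝ)-2), g t = ∫ t in (0:ℝ)..((M:ℝ)-2), (1 - f t) := by
        refine intervalIntegral.integral_congr fun t ht => ?_
        rw [Set.uIcc_of_le (by linarith)] at ht
        simp [hg, ht.1]
      rw [this, intervalIntegral.integral_sub (by simp) (hii _ _)]
      simp
    rw [e1, e2]; ring
  have hB : ∫ t in (-(L:ℝ) - 2)..((M:ℝ) - 2), f t ≤ ∑ i ∈ Finset.range (M + L), F ((i:ℤ) - L) := by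
    have := (hfm.monotoneOn (Set.Icc (-(L:ℝ)-2) ((-(L:ℝ)-2) + (M + L : ℕ)))).integral_le_sum
    have e : (-(L:ℝ)-2) + (M + L : ℕ) = M - 2 := by push_cast; ring
    rw [e] at this
    refine this.trans (Finset.sum_le_sum fun i _ => ?_)
    refine le_trans (le_of_eq ?_) (h1 ((i:ℤ) - L))
    congr 1
    push_cast; ring
  simp only [Function.comp]
  rw [hA]
  have e : (((M + L : ℕ) : ℤ) - L) = M := by push_cast; ring
  have e' : (((M + L : ℕ) : ℝ) - L) = M := by push_cast; ring
  rw [e, e']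
  nlinarith [hFle M]

noncomputable def cellIdx (n : ℕ) (k : ℤ) (x : Fin n → ℝ) : Fin n → ℤ := fun i => ⌊(2:ℝ)^k * x i⌋

def cellUnion (n : ℕ) (A : Set (Fin n → ℝ)) (k : ℤ) : Set (Fin n → ℝ) :=
  {x | dyadicCube n k (cellIdx n k x) ⊆ A}

def cells (n : ℕ) (k : ℤ) (S : Set (Fin n → ℤ)) (c : ℝ) : Set (Fin n → ℝ) :=
  {x | cellIdx n k x ∈ S ∧ ∀ i, Int.fract ((2:ℝ)^k * x i) < c}

lemma two_mul_neg_aux (k : ℤ) : (2:ℝ)^(-k) * (2:ℝ)^k = 1 := by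
  rw [← zpow_add₀ (by norm_num)]; simp

lemma le_iff_aux (k : ℤ) (a b : ℝ) : (2:ℝ)^(-k) * a ≤ b ↔ a ≤ (2:ℝ)^k * b := by
  have h := two_mul_neg_aux k
  have hp : (0:ℝ) < 2^k := by positivity
  have : a = (2:ℝ)^k * ((2:ℝ)^(-k) * a) := by rw [← mul_assoc, mul_comm ((2:ℝ)^k), h, one_mul]
  conv_rhs => rw [this]
  exact (mul_le_mul_iff_right₀ hp).symm

lemma ge_iff_aux (k : ℤ) (a b : ℝ) : b ≤ (2:ℝ)^(-k) * a ↔ (2:ℝ)^k * b ≤ a := by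
  have h := two_mul_neg_aux k
  have hp : (0:ℝ) < 2^k := by positivity
  have : a = (2:ℝ)^k * ((2:ℝ)^(-k) * a) := by rw [← mul_assoc, mul_comm ((2:ℝ)^k), h, one_mul]
  conv_rhs => rw [this]
  exact (mul_le_mul_iff_right₀ hp).symm

lemma mem_dyadicCube_aux (n : ℕ) (k : ℤ) (v : Fin n → ℤ) (x : Fin n → ℝ) :
    x ∈ dyadicCube n k v ↔ ∀ i, (v i : ℝ) ≤ (2:ℝ)^k * x i ∧ (2:ℝ)^k * x i ≤ v i + 1 := by
  simp only [dyadicCube, Set.mem_ofPred_eq, le_iff_aux, ge_iff_aux]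

lemma self_mem_cube (n : ℕ) (k : ℤ) (x : Fin n → ℝ) : x ∈ dyadicCube n k (cellIdx n k x) := by
  rw [mem_dyadicCube_aux]
  exact fun i => ⟨Int.floor_le _, (Int.lt_floor_add_one _).le⟩

lemma measurable_cellIdx (n : ℕ) (k : ℤ) : Measurable (cellIdx n k) := by
  refine measurable_pi_lambda _ fun i => ?_
  exact Int.measurable_floor.comp ((measurable_pi_apply i).const_mul _)

lemma cells_singleton (n : ℕ) (k : ℤ) (v : Fin n → ℤ) (c : ℝ) (hc1 : c ≤ 1) :
    cells n k {v} c = Set.pi Set.univ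
      (fun i => Set.Ico ((2:ℝ)^(-k) * v i) ((2:ℝ)^(-k) * (v i + c))) := by
  ext x
  have lt_iff : ∀ a b, b < (2:ℝ)^(-k) * a ↔ (2:ℝ)^k * b < a := fun a b => by
    rw [← not_le, ← not_le, le_iff_aux]
  simp only [cells, Set.mem_ofPred_eq, Set.mem_singleton_iff, Set.mem_pi, Set.mem_univ, true_imp_iff,
    Set.mem_Ico, le_iff_aux, lt_iff]
  constructor
  · rintro ⟨h1, h2⟩ i
    have h3 : ⌊(2:ℝ)^k * x i⌋ = v i := congrFun h1 i
    have h4 := h2 i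
    rw [Int.fract, h3] at h4
    exact ⟨h3 ▸ Int.floor_le _, by linarith⟩
  · intro h
    have h3 : ∀ i, ⌊(2:ℝ)^k * x i⌋ = v i := fun i => by
      rw [Int.floor_eq_iff]; exact ⟨(h i).1, by linarith [(h i).2]⟩
    refine ⟨funext h3, fun i => ?_⟩
    rw [Int.fract, h3]; linarith [(h i).2]

lemma measurable_cells (n : ℕ) (k : ℤ) (S : Set (Fin n → ℤ)) (c : ℝ) :
    MeasurableSet (cells n k S c) := by
  refine (measurable_cellIdx n k (S.to_countable.measurableSet)).inter ?_
  change MeasurableSet {x : Fin n → ℝ | ∀ i, Int.fract ((2:ℝ)^k * x i) < c}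
  rw [Set.ofPred_forall]
  refine MeasurableSet.iInter fun i => ?_
  exact measurableSet_lt (measurable_fract.comp ((measurable_pi_apply i).const_mul _))
    measurable_const

lemma volume_cells (n : ℕ) (k : ℤ) (S : Set (Fin n → ℤ)) (c : ℝ) (hc1 : c ≤ 1) :
    volume (cells n k S c) = (S.encard : ENNReal) * ENNReal.ofReal ((2:ℝ)^(-k) * c) ^ n := by
  have hU : cells n k S c = ⋃ v : S, cells n k {v.1} c := by
    ext x; simp [cells]
  rw [hU, measure_iUnion]
  · have : ∀ v : S, volume (cells n k {v.1} c) = ENNReal.ofReal ((2:ℝ)^(-k) * c) ^ n := by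
      intro v
      rw [cells_singleton n k v.1 c hc1, Real.volume_pi_Ico]
      simp only [mul_add, add_sub_cancel_left, Finset.prod_const, Finset.card_univ, Fintype.card_fin]
    simp only [this]
    rw [ENNReal.tsum_const]
    simp
  · intro v w hvw
    refine Set.disjoint_left.2 fun x hx hy => hvw ?_
    simp only [cells, Set.mem_ofPred_eq, Set.mem_singleton_iff] at hx hy
    exact Subtype.ext (hx.1.symm.trans hy.1)
  · exact fun v => measurable_cells _ _ _ _

lemma cells_one (n : ℕ) (k : ℤ) (S : Set (Fin n → ℤ)) :
    cells n k S 1 = {x | cellIdx n k x ∈ S} := by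
  ext x; simp [cells, Int.fract_lt_one]

lemma cellUnion_eq (n : ℕ) (A : Set (Fin n → ℝ)) (k : ℤ) :
    cellUnion n A k = cells n k {v | dyadicCube n k v ⊆ A} 1 := by
  rw [cells_one]; rfl

lemma cellUnion_subset (n : ℕ) (A : Set (Fin n → ℝ)) (k : ℤ) : cellUnion n A k ⊆ A :=
  fun x hx => hx (self_mem_cube n k x)

lemma parent_idx (n : ℕ) (k : ℤ) (x : Fin n → ℝ) :
    (fun i => Int.fdiv (cellIdx n k x i) 2) = cellIdx n (k-1) x := by
  funext i
  simp only [cellIdx]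
  rw [Int.fdiv_eq_ediv_of_nonneg _ (by norm_num)]
  have : (2:ℝ)^(k-1) * x i = (2:ℝ)^k * x i / (2:ℕ) := by
    rw [zpow_sub_one₀ (by norm_num)]; push_cast; ring
  rw [this, Int.floor_div_natCast]
  rfl

lemma parent_subset (n : ℕ) (k : ℤ) (v : Fin n → ℤ) :
    dyadicCube n k v ⊆ dyadicCube n (k-1) (fun i => Int.fdiv (v i) 2) := by
  intro y hy
  rw [mem_dyadicCube_aux] at hy ⊢
  intro i
  obtain ⟨h1, h2⟩ := hy i
  have : (2:ℝ)^(k-1) * y i = ((2:ℝ)^k * y i) / 2 := by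
    rw [zpow_sub_one₀ (by norm_num)]; ring
  rw [this, Int.fdiv_eq_ediv_of_nonneg _ (by norm_num)]
  have a1 : ((2 * (v i / 2) : ℤ) : ℝ) ≤ v i := by exact_mod_cast (by omega)
  have a2 : (v i : ℝ) ≤ ((2 * (v i / 2) + 1 : ℤ) : ℝ) := by exact_mod_cast (by omega)
  push_cast at a1 a2
  constructor <;> linarith

lemma cellUnion_mono (n : ℕ) (A : Set (Fin n → ℝ)) : Monotone (cellUnion n A) := by
  refine monotone_int_of_le_succ fun k x hx => ?_
  have h : dyadicCube n (k+1) (cellIdx n (k+1) x) ⊆ dyadicCube n k (cellIdx n k x) := by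
    have := parent_subset n (k+1) (cellIdx n (k+1) x)
    rwa [parent_idx, add_sub_cancel_right] at this
  exact h.trans hx

lemma family_cells (n : ℕ) (A : Set (Fin n → ℝ)) (k : ℤ) :
    cells n k (dyadicFamily n A k) 1 = cellUnion n A k \ cellUnion n A (k-1) := by
  rw [cells_one]
  ext x
  simp only [dyadicFamily, cellUnion, Set.mem_ofPred_eq, parent_idx, Set.mem_sdiff]

lemma zpow_aux (n : ℕ) (k : ℤ) : ((2:ℝ)^(-k))^n = (2:ℝ)^(-((n:ℤ)*k)) := by
  rw [← zpow_natCast, ← zpow_mul]; congr 1; ring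

lemma real_cells (n : ℕ) (k : ℤ) (S : Set (Fin n → ℤ)) (c : ℝ) (hc0 : 0 ≤ c) (hc1 : c ≤ 1) :
    (volume (cells n k S c)).toReal = (2:ℝ)^(-((n:ℤ)*k)) * (S.ncard : ℝ) * c ^ n := by
  rw [volume_cells n k S c hc1, ENNReal.toReal_mul, ENNReal.toReal_pow,
    ENNReal.toReal_ofReal (by positivity), mul_pow, zpow_aux]
  have : ((S.encard : ENNReal)).toReal = (S.ncard : ℝ) := by
    rcases S.finite_or_infinite with h | h
    · rw [← h.cast_ncard_eq]; simp
    · rw [h.encard_eq, h.ncard]; simp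
  rw [this]; ring

/-- the cube to erode by -/
def sideCube (n : ℕ) (t : ℝ) : Set (Fin n → ℝ) := {x | ∀ i, x i ∈ Set.Icc (0 : ℝ) ((2 : ℝ) ^ (-t))}

lemma erosion_subset (n : ℕ) (A : Set (Fin n → ℝ)) (t : ℝ) : erosion A (sideCube n t) ⊆ A := by
  intro x hx
  have := hx 0 (fun i => ⟨le_rfl, by simp; positivity⟩)
  simpa using this

lemma erosion_mono (n : ℕ) (A : Set (Fin n → ℝ)) : Monotone (fun t => erosion A (sideCube n t)) := by
  intro s t hst x hx b hb
  refine hx b fun i => ⟨(hb i).1, (hb i).2.trans ?_⟩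
  exact Real.rpow_le_rpow_of_exponent_le (by norm_num) (by linarith)

lemma erosion_le (n : ℕ) (A : Set (Fin n → ℝ)) (k : ℤ) :
    volume (erosion A (sideCube n ((k:ℝ) - 1))) ≤ volume (cellUnion n A k) := by
  rw [← measure_preimage_add_right volume (fun _ : Fin n => (2:ℝ)^(-k)) (cellUnion n A k)]
  refine measure_mono fun x hx => ?_
  intro y hy
  rw [mem_dyadicCube_aux] at hy
  have := hx (y - x) ?_
  · simpa using this
  intro i
  have hyi := hy i
  have e : (2:ℝ)^k * ((x + fun _ : Fin n => (2:ℝ)^(-k)) i) = (2:ℝ)^k * x i + 1 := by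
    simp only [Pi.add_apply, mul_add]
    rw [mul_comm _ ((2:ℝ)^(-k)), two_mul_neg_aux]
  simp only [cellIdx, e, Int.floor_add_one] at hyi
  push_cast at hyi
  have f1 := Int.floor_le ((2:ℝ)^k * x i)
  have f2 := Int.lt_floor_add_one ((2:ℝ)^k * x i)
  have e2 : (2:ℝ)^(-((k:ℝ)-1)) = (2:ℝ)^(-k) * 2 := by
    have : -((k:ℝ)-1) = ((-k + 1 : ℤ) : ℝ) := by push_cast; ring
    rw [this, Real.rpow_intCast, zpow_add_one₀ (by norm_num)]
  rw [e2, Set.mem_Icc, ge_iff_aux, Pi.sub_apply, mul_sub]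
  refine ⟨?_, by linarith⟩
  have hp : (0:ℝ) < 2^k := by positivity
  have : (2:ℝ)^k * x i ≤ 2^k * y i := by linarith
  linarith [(mul_le_mul_iff_right₀ hp).1 this]

lemma erosion_ge (n : ℕ) (A : Set (Fin n → ℝ)) (k : ℕ) :
    cells n k {v | dyadicCube n k v ⊆ A} (1 - (1/2:ℝ)^k) ⊆ erosion A (sideCube n (2 * (k:ℝ))) := by
  rintro x ⟨hx1, hx2⟩ b hb
  refine hx1 ?_
  rw [mem_dyadicCube_aux]
  intro i
  have h2 := hx2 i
  obtain ⟨b1, b2⟩ := hb i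
  have e2 : (2:ℝ)^(-(2 * (k:ℝ))) = (2:ℝ)^(-(k:ℤ)) * (1/2:ℝ)^k := by
    have : -(2 * (k:ℝ)) = ((-k + -k : ℤ) : ℝ) := by push_cast; ring
    rw [this, Real.rpow_intCast, zpow_add₀ (by norm_num)]
    simp
  rw [e2, ge_iff_aux] at b2
  have hp : (0:ℝ) < 2^(k:ℤ) := by positivity
  have b3 : 0 ≤ (2:ℝ)^(k:ℤ) * b i := by positivity
  have f1 := Int.floor_le ((2:ℝ)^(k:ℤ) * x i)
  simp only [cellIdx, Pi.add_apply, mul_add]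
  rw [Int.fract] at h2
  constructor <;> linarith

lemma interior_subset_iUnion (n : ℕ) (A : Set (Fin n → ℝ)) :
    interior A ⊆ ⋃ k : ℕ, cellUnion n A k := by
  intro x hx
  obtain ⟨ε, hε, hball⟩ := Metric.isOpen_iff.1 isOpen_interior x hx
  obtain ⟨k, hk⟩ := exists_pow_lt_of_lt_one hε (show (1/2:ℝ) < 1 by norm_num)
  refine Set.mem_iUnion.2 ⟨k, fun y hy => interior_subset (hball ?_)⟩
  rw [Metric.mem_ball, dist_comm]
  refine lt_of_le_of_lt ((dist_pi_le_iff (by positivity)).2 fun i => ?_) hk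
  have hx' := self_mem_cube n k x i
  have hy' := hy i
  have e : (2:ℝ)^(-(k:ℤ)) = (1/2)^k := by simp
  rw [e] at hx' hy'
  rw [Real.dist_eq, abs_le]
  constructor <;> nlinarith

theorem stmt_7 (n : ℕ) (hn : 0 < n) (A : Set (Fin n → ℝ)) (hA : MeasurableSet A)
    (h0 : 0 < volume A) (hfin : volume A ≠ ⊤) (hb : volume (frontier A) = 0)
    (hsum : Summable (fun k : ℤ => (k : ℝ) *
      ((2 : ℝ) ^ (-((n : ℤ) * k)) * ((dyadicFamily n A k).ncard : ℝ) / (volume A).toReal))) :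
    (∑' k : ℤ, (k : ℝ) *
        ((2 : ℝ) ^ (-((n : ℤ) * k)) * ((dyadicFamily n A k).ncard : ℝ) / (volume A).toReal))
      ≤ erosionEntropy n A + 2 := by
  have hV : 0 < (volume A).toReal := ENNReal.toReal_pos h0.ne' hfin
  have hUfin : ∀ k, volume (cellUnion n A k) ≠ ⊤ := fun k =>
    ne_top_of_le_ne_top hfin (measure_mono (cellUnion_subset n A k))
  have hUm : ∀ k, MeasurableSet (cellUnion n A k) := fun k => by
    rw [cellUnion_eq]; exact measurable_cells _ _ _ _
  have hEfin : ∀ t, volume (erosion A (sideCube n t)) ≠ ⊤ := fun t =>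
    ne_top_of_le_ne_top hfin (measure_mono (erosion_subset n A t))
  let F : ℤ → ℝ := fun k => (volume (cellUnion n A k)).toReal / (volume A).toReal
  let f : ℝ → ℝ := fun t => (volume (erosion A (sideCube n t))).toReal / (volume A).toReal
  have hp : ∀ k : ℤ, (2 : ℝ) ^ (-((n : ℤ) * k)) * ((dyadicFamily n A k).ncard : ℝ)
      / (volume A).toReal = F k - F (k-1) := by
    intro k
    have h := real_cells n k (dyadicFamily n A k) 1 (by norm_num) le_rfl
    rw [one_pow, mul_one, family_cells, measure_sdiff (cellUnion_mono n A (by omega))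
      (hUm _).nullMeasurableSet (hUfin _), ENNReal.toReal_sub_of_le
      (measure_mono (cellUnion_mono n A (by omega))) (hUfin _)] at h
    simp only [F]
    rw [← h, sub_div]
  have hE : erosionEntropy n A = ∫ t : ℝ, ((if 0 ≤ t then (1:ℝ) else 0) - f t) := rfl
  simp only [hp] at hsum ⊢
  rw [hE]
  obtain ⟨L, hL⟩ := pow_unbounded_of_one_lt (volume A).toReal (show (1:ℝ) < 2 by norm_num)
  refine analytic_aux F f n L ?_ ?_ ?_ ?_ ?_ ?_ ?_ ?_ hsum
  · intro a b hab
    exact div_le_div_of_nonneg_right (ENNReal.toReal_mono (hUfin _)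
      (measure_mono (cellUnion_mono n A hab))) hV.le
  · intro k hk
    have : cellUnion n A k = ∅ := by
      by_contra hne
      obtain ⟨x, hx⟩ := Set.nonempty_iff_ne_empty.2 hne
      have hsub : cells n k {cellIdx n k x} 1 ⊆ A := by
        intro y hy
        rw [cells_one] at hy
        have hy' : cellIdx n k y = cellIdx n k x := hy
        exact hx (hy' ▸ self_mem_cube n k y)
      have h := ENNReal.toReal_mono hfin (measure_mono hsub)
      rw [real_cells n k _ 1 (by norm_num) le_rfl] at h
      simp only [Set.ncard_singleton, Nat.cast_one, mul_one, one_pow] at h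
      have h3 : (2:ℝ)^(L:ℤ) ≤ (2:ℝ)^(-((n:ℤ)*k)) := by
        refine zpow_le_zpow_right₀ (by norm_num) ?_
        have : (1:ℤ) ≤ n := by exact_mod_cast hn
        nlinarith
      rw [zpow_natCast] at h3
      linarith
    simp [F, this]
  · have hmono : Monotone (fun k : ℕ => cellUnion n A k) := fun a b h =>
      cellUnion_mono n A (by exact_mod_cast h)
    have ht := tendsto_measure_iUnion_atTop (μ := volume) hmono
    have hU : volume (⋃ k : ℕ, cellUnion n A k) = volume A := by
      refine le_antisymm (measure_mono (Set.iUnion_subset fun k => cellUnion_subset n A k)) ?_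
      rw [← measure_congr (interior_ae_eq_of_null_frontier hb)]
      exact measure_mono (interior_subset_iUnion n A)
    rw [hU] at ht
    have := ((ENNReal.tendsto_toReal hfin).comp ht).div_const (volume A).toReal
    rw [div_self hV.ne'] at this
    exact this
  · intro a b hab
    exact div_le_div_of_nonneg_right (ENNReal.toReal_mono (hEfin _)
      (measure_mono (erosion_mono n A hab))) hV.le
  · intro t; positivity
  · intro t
    exact (div_le_one hV).2 (ENNReal.toReal_mono hfin (measure_mono (erosion_subset n A t)))
  · intro k
    exact div_le_div_of_nonneg_right (ENNReal.toReal_mono (hUfin _) (erosion_le n A k)) hV.le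
  · intro k
    simp only [F, f]
    rw [← mul_div_assoc]
    refine div_le_div_of_nonneg_right ?_ hV.le
    have hc1 : (1/2:ℝ)^k ≤ 1 := pow_le_one₀ (by norm_num) (by norm_num)
    have hc0 : 0 < (1/2:ℝ)^k := by positivity
    have h := ENNReal.toReal_mono (hEfin _) (measure_mono (erosion_ge n A k))
    refine le_trans ?_ h
    rw [cellUnion_eq, real_cells _ _ _ _ (by norm_num) le_rfl,
      real_cells _ _ _ _ (by linarith) (by linarith), one_pow, mul_one, mul_comm]
    refine mul_le_mul_of_nonneg_left ?_ (by positivity)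
    have := one_add_mul_le_pow (show -2 ≤ -(1/2:ℝ)^k by linarith) n
    rw [← sub_eq_add_neg 1] at this
    linarith
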